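/- arXiv:2304.04201 — 2 statements merged into one kernel-verified Lean document; each statement's English description precedes it below -/
import Mathlib

section
/- The function f fails the Ambrosetti–Rabinowitz condition: for every z ∈ closure(Ω) and every β > p_+ one has f(z,x)x − β F(z,x) → −∞ as x → +∞. In particular, there exist no constants β > p_+ and M ≥ 1 such that 0 < β F(z,x) ≤ f(z,x)x for all z ∈ closure(Ω) and all |x| ≥ M. -/
open MeasureTheory Filter intervalIntegral

theorem fails_Ambrosetti_Rabinowitz
    {N : ℕ} (hN : 1 ≤ N) (Ω : Set (Fin N → ℝ)) (hΩne : Ω.Nonempty) (hΩop : IsOpen Ω)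
    (hΩbd : Bornology.IsBounded Ω)
    (θ : ℝ) (hθ1 : 1 < θ) (hθ2 : θ < 2)
    (p : (Fin N → ℝ) → ℝ) (hpc : ContinuousOn p (closure Ω))
    (pm pp : ℝ) (hpm : IsLeast (p '' closure Ω) pm) (hpp : IsGreatest (p '' closure Ω) pp)
    (hpm2 : 2 < pm)
    (f : (Fin N → ℝ) → ℝ → ℝ)
    (hf0 : ∀ z, f z 0 = 0)
    (hfsmall : ∀ z, ∀ x : ℝ, x ≠ 0 → |x| ≤ 1 → f z x = (|x| ^ (θ - 2) - 1) * x)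
    (hfbig : ∀ z, ∀ x : ℝ, 1 < |x| →
      f z x = |x| ^ (pp - 2) * x * Real.log |x| + (|x| ^ (p z - 2) - 1) * x) :
    (∀ z ∈ closure Ω, ∀ β : ℝ, pp < β →
      Tendsto (fun x : ℝ => f z x * x - β * ∫ s in (0:ℝ)..x, f z s) atTop atBot) ∧
    ¬ ∃ β : ℝ, pp < β ∧ ∃ M : ℝ, 1 ≤ M ∧ ∀ z ∈ closure Ω, ∀ x : ℝ, M ≤ |x| →
        0 < β * (∫ s in (0:ℝ)..x, f z s) ∧
          β * (∫ s in (0:ℝ)..x, f z s) ≤ f z x * x := by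
  have key : ∀ z ∈ closure Ω, ∀ β : ℝ, pp < β →
      Tendsto (fun x : ℝ => f z x * x - β * ∫ s in (0:ℝ)..x, f z s) atTop atBot := by
    intro z hz β hβ
    have hq2 : 2 < p z := lt_of_lt_of_le hpm2 (hpm.2 ⟨z, hz, rfl⟩)
    have hqP : p z ≤ pp := hpp.2 ⟨z, hz, rfl⟩
    set q := p z with hq
    have hP2 : 2 < pp := lt_of_lt_of_le hq2 hqP
    have hP0 : 0 < pp := by linarith
    have hq0 : 0 < q := by linarith
    -- the primitive on [1, ∞)
    let g : ℝ → ℝ := fun s => s ^ (pp - 1) * Real.log s + s ^ (q - 1) - s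
    let G : ℝ → ℝ := fun s => s ^ pp * Real.log s / pp - s ^ pp / pp ^ 2 + s ^ q / q - s ^ 2 / 2
    have hfg : ∀ s : ℝ, 1 ≤ s → f z s = g s := by
      intro s hs
      have hs0 : 0 < s := by linarith
      rcases eq_or_lt_of_le hs with h | h
      · subst h
        rw [hfsmall z 1 one_ne_zero (by simp)]
        simp [g]
      · rw [hfbig z s (by rwa [abs_of_pos hs0]), abs_of_pos hs0]
        have e1 : s ^ (pp - 1) = s ^ (pp - 2) * s := by
          rw [← Real.rpow_add_one hs0.ne']; congr 1; ring
        have e2 : s ^ (q - 1) = s ^ (q - 2) * s := by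
          rw [← Real.rpow_add_one hs0.ne']; congr 1; ring
        simp only [g]
        rw [e1, e2]; ring
    have hGd : ∀ s : ℝ, 1 ≤ s → HasDerivAt G (g s) s := by
      intro s hs
      have hs0 : 0 < s := by linarith
      have h1 := Real.hasDerivAt_rpow_const (x := s) (p := pp) (Or.inl hs0.ne')
      have h2 := Real.hasDerivAt_rpow_const (x := s) (p := q) (Or.inl hs0.ne')
      have h3 := Real.hasDerivAt_log hs0.ne'
      have h4 := hasDerivAt_pow 2 s
      have := ((((h1.mul h3).div_const pp).sub (h1.div_const (pp ^ 2))).add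
        (h2.div_const q)).sub (h4.div_const 2)
      refine this.congr_deriv ?_
      have e1 : s ^ pp = s ^ (pp - 1) * s := by
        rw [← Real.rpow_add_one hs0.ne']; congr 1; ring
      simp only [g]
      rw [e1]
      field_simp
      push_cast
      ring
    have hgc : ContinuousOn g (Set.Ici 1) := by
      intro s hs
      have hs0 : s ≠ 0 := by
        have : (1:ℝ) ≤ s := hs
        linarith
      apply ContinuousAt.continuousWithinAt
      exact (((Real.continuousAt_rpow_const s _ (Or.inl hs0)).mul
        (Real.continuousAt_log hs0)).add (Real.continuousAt_rpow_const s _ (Or.inl hs0))).sub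
        continuousAt_id
    have hint1 : ∀ x : ℝ, 1 ≤ x → IntervalIntegrable g volume 1 x := by
      intro x hx
      apply ContinuousOn.intervalIntegrable
      rw [Set.uIcc_of_le hx]
      exact hgc.mono (fun s hs => hs.1)
    have hint0 : IntervalIntegrable (f z) volume 0 1 := by
      have hc : IntervalIntegrable (fun s : ℝ => s ^ (θ - 1) - s) volume 0 1 := by
        apply Continuous.intervalIntegrable
        exact (Real.continuous_rpow_const (by linarith)).sub continuous_id
      refine hc.congr ?_
      intro s hs
      rw [Set.uIoc_of_le zero_le_one] at hs
      have hs0 : 0 < s := hs.1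
      have e1 : s ^ (θ - 1) = s ^ (θ - 2) * s := by
        rw [← Real.rpow_add_one hs0.ne']; congr 1; ring
      simp only
      rw [hfsmall z s hs0.ne' (by rw [abs_of_pos hs0]; exact hs.2), abs_of_pos hs0, e1]
      ring
    set c := ∫ s in (0:ℝ)..1, f z s with hc
    have hF : ∀ x : ℝ, 1 ≤ x → ∫ s in (0:ℝ)..x, f z s = c + (G x - G 1) := by
      intro x hx
      have hEq : Set.EqOn g (f z) (Set.uIcc 1 x) := by
        intro s hs
        rw [Set.uIcc_of_le hx] at hs
        exact (hfg s hs.1).symm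
      have hfi : IntervalIntegrable (f z) volume 1 x :=
        (hint1 x hx).congr (fun s hs => hEq (Set.uIoc_subset_uIcc hs))
      rw [← integral_add_adjacent_intervals hint0 hfi, ← integral_congr hEq,
        integral_eq_sub_of_hasDerivAt _ (hint1 x hx)]
      intro s hs
      rw [Set.uIcc_of_le hx] at hs
      exact hGd s hs.1
    set C := β * (G 1 - c) with hC
    set K := β / pp ^ 2 + |β / 2 - 1| + |C| with hK
    have hlim : Tendsto (fun x : ℝ => x ^ pp * ((1 - β / pp) * Real.log x + K)) atTop atBot := by
      apply (tendsto_rpow_atTop hP0).atTop_mul_atBot₀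
      apply tendsto_atBot_add_const_right
      apply Real.tendsto_log_atTop.const_mul_atTop_of_neg
      have : 1 < β / pp := by rwa [one_lt_div hP0]
      linarith
    refine tendsto_atBot_mono' atTop ?_ hlim
    filter_upwards [eventually_ge_atTop (1:ℝ)] with x hx
    have hx0 : 0 < x := by linarith
    rw [hF x hx, hfg x hx]
    have e1 : x ^ pp = x ^ (pp - 1) * x := by
      rw [← Real.rpow_add_one hx0.ne']; congr 1; ring
    have e2 : x ^ q = x ^ (q - 1) * x := by
      rw [← Real.rpow_add_one hx0.ne']; congr 1; ring
    have hid : g x * x - β * (c + (G x - G 1)) = (1 - β / pp) * (x ^ pp * Real.log x)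
        + β / pp ^ 2 * x ^ pp + (1 - β / q) * x ^ q + (β / 2 - 1) * x ^ 2 + C := by
      have : g x * x = x ^ pp * Real.log x + x ^ q - x ^ 2 := by
        simp only [g]; rw [e1, e2]; ring
      rw [this, hC]
      have : G x = x ^ pp * Real.log x / pp - x ^ pp / pp ^ 2 + x ^ q / q - x ^ 2 / 2 := rfl
      rw [this]; ring
    rw [hid]
    have b1 : (1 - β / q) * x ^ q ≤ 0 := by
      apply mul_nonpos_of_nonpos_of_nonneg
      · have : 1 ≤ β / q := by rw [one_le_div hq0]; linarith
        linarith
      · positivity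
    have b2 : x ^ 2 ≤ x ^ pp := by
      rw [← Real.rpow_two]
      exact Real.rpow_le_rpow_of_exponent_le hx hP2.le
    have b3 : 1 ≤ x ^ pp := Real.one_le_rpow hx hP0.le
    have b4 : (β / 2 - 1) * x ^ 2 ≤ |β / 2 - 1| * x ^ pp :=
      mul_le_mul (le_abs_self _) b2 (by positivity) (abs_nonneg _)
    have b5 : C ≤ |C| * x ^ pp :=
      (le_abs_self C).trans (le_mul_of_one_le_right (abs_nonneg _) b3)
    rw [hK]
    linarith
  refine ⟨key, ?_⟩
  rintro ⟨β, hβ, M, hM, h⟩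
  obtain ⟨z, hz⟩ := hΩne
  have hz' := subset_closure hz
  obtain ⟨x, hx1, hx2⟩ := (((key z hz' β hβ).eventually (eventually_lt_atBot 0)).and
    (eventually_ge_atTop M)).exists
  have := (h z hz' x (hx2.trans (le_abs_self x))).2
  linarith
end

section
/- The function f satisfies the non-AR superlinearity condition with exponent μ = p_+ and constant 1/p_+: for every ε > 0 there exists M ≥ 1 such that (f(z,x)x − p_+ F(z,x)) / |x|^{p_+} ≥ 1/p_+ − ε for all z ∈ closure(Ω) and all |x| ≥ M; that is, liminf_{x→±∞} (f(z,x)x − p_+F(z,x))/|x|^{p_+} ≥ 1/p_+ > 0 uniformly for z ∈ closure(Ω). -/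
open MeasureTheory Filter intervalIntegral

/-- The integral of the small part over `(0,1]`. -/
lemma aux_small (θ : ℝ) (hθ1 : 1 < θ) (g : ℝ → ℝ)
    (hs : ∀ x : ℝ, 0 < x → x ≤ 1 → g x = (x ^ (θ - 2) - 1) * x) :
    IntervalIntegrable g volume 0 1 ∧ ∫ s in (0:ℝ)..1, g s = 1 / θ - 1 / 2 := by
  have h1 : IntervalIntegrable (fun s : ℝ => s ^ (θ - 1)) volume 0 1 :=
    intervalIntegral.intervalIntegrable_rpow' (by linarith)
  have h2 : IntervalIntegrable (fun s : ℝ => s) volume 0 1 :=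
    continuous_id.intervalIntegrable _ _
  have he : Set.EqOn (fun s : ℝ => s ^ (θ - 1) - s) g (Set.uIoc 0 1) := by
    intro s hsm
    rw [Set.uIoc_of_le zero_le_one] at hsm
    simp only
    rw [hs s hsm.1 hsm.2, show θ - 1 = (θ - 2) + 1 by ring, Real.rpow_add_one hsm.1.ne']
    ring
  refine ⟨(h1.sub h2).congr he, ?_⟩
  rw [← intervalIntegral.integral_congr_ae (Eventually.of_forall fun s hsm => he hsm), intervalIntegral.integral_sub h1 h2,
    integral_rpow (Or.inl (by linarith)), integral_id]
  rw [Real.zero_rpow (by linarith)]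
  norm_num

lemma aux_big (P q : ℝ) (hq : 0 < q) (hP : 0 < P) (g : ℝ → ℝ)
    (hb : ∀ x : ℝ, 1 < x → g x = x ^ (P - 2) * x * Real.log x + (x ^ (q - 2) - 1) * x)
    (x : ℝ) (hx : 1 ≤ x) :
    IntervalIntegrable g volume 1 x ∧ ∫ s in (1:ℝ)..x, g s =
      (x ^ P * Real.log x / P - x ^ P / P ^ 2 + x ^ q / q - x ^ 2 / 2)
        - (- 1 / P ^ 2 + 1 / q - 1 / 2) := by
  set h : ℝ → ℝ := fun s => s ^ (P - 1) * Real.log s + s ^ (q - 1) - s with hh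
  have hc : ContinuousOn h (Set.uIcc 1 x) := by
    rw [Set.uIcc_of_le hx]
    intro s hs
    have : s ≠ 0 := by have := hs.1; intro h; linarith
    apply ContinuousAt.continuousWithinAt
    have a1 := Real.continuousAt_rpow_const s (P - 1) (Or.inl this)
    have a2 := Real.continuousAt_rpow_const s (q - 1) (Or.inl this)
    have a3 := Real.continuousAt_log this
    exact ((a1.mul a3).add a2).sub continuousAt_id
  have he : Set.EqOn h g (Set.uIoc 1 x) := by
    intro s hsm
    rw [Set.uIoc_of_le hx] at hsm
    have h0 : s ≠ 0 := by have := hsm.1; intro h; linarith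
    simp only [hh]
    rw [hb s hsm.1, show P - 1 = (P - 2) + 1 by ring, Real.rpow_add_one h0,
      show q - 1 = (q - 2) + 1 by ring, Real.rpow_add_one h0]
    ring
  refine ⟨hc.intervalIntegrable.congr he, ?_⟩
  rw [← intervalIntegral.integral_congr_ae (Eventually.of_forall fun s hsm => he hsm),
    intervalIntegral.integral_eq_sub_of_hasDerivAt
      (f := fun s : ℝ => s ^ P * Real.log s / P - s ^ P / P ^ 2 + s ^ q / q - s ^ 2 / 2)
      ?_ hc.intervalIntegrable]
  · simp
    ring
  · intro s hs
    rw [Set.uIcc_of_le hx] at hs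
    have h0 : s ≠ 0 := by have := hs.1; intro h; linarith
    have d1 := Real.hasDerivAt_rpow_const (x := s) (p := P) (Or.inl h0)
    have d2 := Real.hasDerivAt_rpow_const (x := s) (p := q) (Or.inl h0)
    have d3 := Real.hasDerivAt_log h0
    have d4 := hasDerivAt_pow 2 s
    have d := ((((d1.mul d3).div_const P).sub (d1.div_const (P ^ 2))).add
      (d2.div_const q)).sub (d4.div_const 2)
    refine d.congr_deriv ?_
    change _ = s ^ (P - 1) * Real.log s + s ^ (q - 1) - s
    norm_num
    have e : s ^ P = s ^ (P - 1) * s := by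
      rw [← Real.rpow_add_one h0]; congr 1; ring
    rw [e]
    field_simp
    ring

lemma aux_main (θ P q : ℝ) (hθ1 : 1 < θ) (hθ2 : θ < 2) (hq : 2 < q) (hqP : q ≤ P) (g : ℝ → ℝ)
    (hs : ∀ x : ℝ, 0 < x → x ≤ 1 → g x = (x ^ (θ - 2) - 1) * x)
    (hb : ∀ x : ℝ, 1 < x → g x = x ^ (P - 2) * x * Real.log x + (x ^ (q - 2) - 1) * x)
    (ε : ℝ) (hε : 0 < ε) (x : ℝ) (hx : Real.exp (2 / ε) ≤ x) :
    1 / P - ε ≤ (g x * x - P * ∫ s in (0:ℝ)..x, g s) / x ^ P := by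
  have hx1 : 1 < x := lt_of_lt_of_le (Real.one_lt_exp_iff.2 (by positivity)) hx
  have hx0 : 0 < x := by linarith
  have hP : 0 < P := by linarith
  have hq0 : 0 < q := by linarith
  have hL : 2 / ε ≤ Real.log x := (Real.le_log_iff_exp_le hx0).2 hx
  obtain ⟨i1, e1⟩ := aux_small θ hθ1 g hs
  obtain ⟨i2, e2⟩ := aux_big P q hq0 hP g hb x hx1.le
  rw [← intervalIntegral.integral_add_adjacent_intervals i1 i2, e1, e2, hb x hx1]
  have eP : x ^ P = x ^ (P - 2) * x ^ 2 := by
    rw [← Real.rpow_natCast x 2, ← Real.rpow_add hx0]; congr 1; simp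
  have eq : x ^ q = x ^ (q - 2) * x ^ 2 := by
    rw [← Real.rpow_natCast x 2, ← Real.rpow_add hx0]; congr 1; simp
  have hA : 0 < x ^ P := Real.rpow_pos_of_pos hx0 _
  have hB : 0 < x ^ q := Real.rpow_pos_of_pos hx0 _
  have hLp : 0 < Real.log x := Real.log_pos hx1
  have k0 : 2 ≤ ε * Real.log x := by
    rw [div_le_iff₀ hε] at hL; linarith
  have k1 : P * Real.log x ≤ x ^ P := by
    rw [Real.rpow_def_of_pos hx0]
    have := Real.add_one_le_exp (Real.log x * P)
    linarith
  have k2 : (P - q) * Real.log x * x ^ q ≤ x ^ P := by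
    have : x ^ P = x ^ (P - q) * x ^ q := by
      rw [← Real.rpow_add hx0]; congr 1; ring
    rw [this]
    gcongr
    rw [Real.rpow_def_of_pos hx0]
    have := Real.add_one_le_exp (Real.log x * (P - q))
    linarith
  generalize Real.log x = L at *
  have hnum : (x ^ (P - 2) * x * L + (x ^ (q - 2) - 1) * x) * x -
      P * (1 / θ - 1 / 2 + (x ^ P * L / P - x ^ P / P ^ 2 + x ^ q / q - x ^ 2 / 2
        - (- 1 / P ^ 2 + 1 / q - 1 / 2))) =
      x ^ P / P - (P - q) / q * x ^ q + (P / 2 - 1) * x ^ 2 - P / θ - 1 / P + P / q := by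
    rw [eP, eq]
    field_simp
    ring
  rw [hnum, le_div_iff₀ hA]
  have m1 : P / θ ≤ P := div_le_self hP.le hθ1.le
  have m2 : 1 ≤ P / q := (one_le_div hq0).2 hqP
  have m3 : 1 / P ≤ 1 := (div_le_one hP).2 (by linarith)
  have m4 : 0 ≤ (P / 2 - 1) * x ^ 2 := by
    apply mul_nonneg _ (sq_nonneg x); linarith
  have m5 : (P - q) / q * x ^ q ≤ (P - q) * x ^ q := by
    gcongr
    exact div_le_self (by linarith) (by linarith)
  have m6 : (P - q) * x ^ q + P ≤ ε * x ^ P := by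
    have t : ((P - q) * x ^ q + P) * L ≤ (ε * x ^ P) * L := by
      nlinarith
    exact le_of_mul_le_mul_right t hLp
  have m7 : (1 / P - ε) * x ^ P = x ^ P / P - ε * x ^ P := by ring
  linarith

theorem satisfies_non_AR_superlinearity
    {N : ℕ} (hN : 1 ≤ N) (Ω : Set (Fin N → ℝ)) (hΩne : Ω.Nonempty) (hΩop : IsOpen Ω)
    (hΩbd : Bornology.IsBounded Ω)
    (θ : ℝ) (hθ1 : 1 < θ) (hθ2 : θ < 2)
    (p : (Fin N → ℝ) → ℝ) (hpc : ContinuousOn p (closure Ω))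
    (pm pp : ℝ) (hpm : IsLeast (p '' closure Ω) pm) (hpp : IsGreatest (p '' closure Ω) pp)
    (hpm2 : 2 < pm)
    (f : (Fin N → ℝ) → ℝ → ℝ)
    (hf0 : ∀ z, f z 0 = 0)
    (hfsmall : ∀ z, ∀ x : ℝ, x ≠ 0 → |x| ≤ 1 → f z x = (|x| ^ (θ - 2) - 1) * x)
    (hfbig : ∀ z, ∀ x : ℝ, 1 < |x| →
      f z x = |x| ^ (pp - 2) * x * Real.log |x| + (|x| ^ (p z - 2) - 1) * x) :
    ∀ ε > (0:ℝ), ∃ M : ℝ, 1 ≤ M ∧ ∀ z ∈ closure Ω, ∀ x : ℝ, M ≤ |x| →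
      1 / pp - ε ≤ (f z x * x - pp * ∫ s in (0:ℝ)..x, f z s) / |x| ^ pp := by
  intro ε hε
  refine ⟨Real.exp (2 / ε), Real.one_le_exp (by positivity), ?_⟩
  intro z hz x hx
  have hq : 2 < p z := lt_of_lt_of_le hpm2 (hpm.2 ⟨z, hz, rfl⟩)
  have hqP : p z ≤ pp := hpp.2 ⟨z, hz, rfl⟩
  rcases le_total 0 x with h | h
  · rw [abs_of_nonneg h] at hx ⊢
    refine aux_main θ pp (p z) hθ1 hθ2 hq hqP (f z) ?_ ?_ ε hε x hx
    · intro y hy hy1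
      rw [hfsmall z y hy.ne' (by rwa [abs_of_pos hy]), abs_of_pos hy]
    · intro y hy
      have hy0 : 0 < y := by linarith
      rw [hfbig z y (by rwa [abs_of_pos hy0]), abs_of_pos hy0]
  · rw [abs_of_nonpos h] at hx ⊢
    have := aux_main θ pp (p z) hθ1 hθ2 hq hqP (fun y => - f z (-y)) ?_ ?_ ε hε (-x) hx
    · have e : ∫ s in (0:ℝ)..(-x), - f z (-s) = ∫ s in (0:ℝ)..x, f z s := by
        rw [intervalIntegral.integral_neg, intervalIntegral.integral_comp_neg (f z),
          neg_neg, neg_zero, intervalIntegral.integral_symm x 0]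
      rw [e] at this
      simpa using this
    · intro y hy hy1
      rw [hfsmall z (-y) (neg_ne_zero.2 hy.ne')
        (by rwa [abs_neg, abs_of_pos hy]), abs_neg, abs_of_pos hy]
      ring
    · intro y hy
      have hy0 : 0 < y := by linarith
      rw [hfbig z (-y) (by rwa [abs_neg, abs_of_pos hy0]), abs_neg, abs_of_pos hy0]
      ring
end
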